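/- Fix m > 0, α > 0, 0 < R₁ < R, P_T > 0, 𝒩 > 0, γ > 0, reflection coefficients 0 < ξ₂ ≤ ξ₁, κ = ξ₂/ξ₁, and a grouping threshold β̃ with β̃ > 𝒩·γ/(P_T·ξ₂). Let X₁ and X₂ be independent and identically distributed as g²·r^{−2α}, where g has Gamma density m^m·g^{m−1}·e^{−m·g}/Γ(m) and r is independent with density 2r/(R² − R₁²) on [R₁, R]; write Φ for their common CDF and φ for their common density, and assume 0 < Φ(β̃) < 1. Define p₂ = P( P_T·ξ₁·X₁ ≥ γ·(P_T·ξ₂·X₂ + 𝒩) and P_T·ξ₂·X₂ ≥ γ·𝒩 │ X₁ ≥ β̃ and X₂ < β̃ ), and set L = min{ β̃, max{ 𝒩γ/(P_Tξ₂), β̃/(γκ) − 𝒩/(P_Tξ₂) } }. Then p₂ = ∫_{L}^{β̃} ( 1 − (Φ(γκx + 𝒩γ/(P_Tξ₁)) − Φ(β̃)) / (1 − Φ(β̃)) )·( φ(x)/Φ(β̃) ) dx + ( Φ(L) − Φ(𝒩γ/(P_Tξ₂)) ) / Φ(β̃). -/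

import Mathlib

open MeasureTheory Set Real

/-- The CDF `Φ(x) = P(g²·r^{−2α} < x)` of the composite variable, where `g` has Gamma
density `m^m g^{m−1} e^{−mg}/Γ(m)` on `(0,∞)` and `r` independently has density
`2r/(R_u² − R_l²)` on `[R_l, R_u]`, expressed as the double integral of the joint
density over the event. -/
noncomputable def compositeCDF (m α Rl Ru x : ℝ) : ℝ :=
  ∫ g in Set.Ioi (0 : ℝ), ∫ r in Rl..Ru,
    if g ^ 2 * r ^ (-(2 * α)) < x
    then m ^ m * g ^ (m - 1) * Real.exp (-m * g) / Real.Gamma m *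
      (2 * r / (Ru ^ 2 - Rl ^ 2)) else 0

/-!
Let `μ` be the common law of the received powers, so that `Φ x = μ (-∞, x)`. Given `X₂ = y`, both
nodes are grouped and decoded exactly when `𝒩γ/(P_Tξ₂) ≤ y < β̃` and
`X₁ ≥ max β̃ (γκy + 𝒩γ/(P_Tξ₁))`, so by Fubini the joint probability is the integral over this
range of `y` of the tail `1 - Φ` at the maximum. The affine function `γκy + 𝒩γ/(P_Tξ₁)` crosses `β̃`
at `y = β̃/(γκ) - 𝒩/(P_Tξ₂)`, and `L` is this crossing point clamped to the range: below `L` the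
tail is the constant `1 - Φ β̃`, and above `L` the fundamental theorem of calculus turns `dμ` into
`φ dy`.
-/

open ProbabilityTheory

section RealMeasure

variable {μ : Measure ℝ}

lemma monotone_measureReal_Iio [IsFiniteMeasure μ] : Monotone fun x => μ.real (Iio x) :=
  fun _ _ hxy => measureReal_mono (Iio_subset_Iio hxy)

lemma measureReal_Ico_eq_sub [IsFiniteMeasure μ] {a b : ℝ} (hab : a ≤ b) :
    μ.real (Ico a b) = μ.real (Iio b) - μ.real (Iio a) := by
  rw [← Iio_sdiff_Iio, measureReal_sdiff (Iio_subset_Iio hab) measurableSet_Iio]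

lemma measureReal_Ici_eq_one_sub [IsProbabilityMeasure μ] (a : ℝ) :
    μ.real (Ici a) = 1 - μ.real (Iio a) := by
  rw [← compl_Iio, probReal_compl_eq_one_sub measurableSet_Iio]

lemma intervalIntegrable_of_hasDerivAt_measureReal_Iio [IsFiniteMeasure μ] {φ : ℝ → ℝ} {a b : ℝ}
    (hab : a ≤ b) (hφ : ∀ x ∈ Icc a b, HasDerivAt (fun x => μ.real (Iio x)) (φ x) x) :
    IntervalIntegrable φ volume a b := by
  rw [← uIcc_of_le hab] at hφ
  refine intervalIntegral.intervalIntegrable_deriv_of_nonneg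
    (fun x hx => (hφ x hx).continuousAt.continuousWithinAt)
    (fun x hx => hφ x (Ioo_subset_Icc_self hx))
    (fun x hx => (hφ x (Ioo_subset_Icc_self hx)).nonneg_of_monotone monotone_measureReal_Iio)

lemma measure_Ico_eq_setLIntegral_of_hasDerivAt [IsFiniteMeasure μ] {φ : ℝ → ℝ} {a b : ℝ}
    (hab : a ≤ b) (hφ : ∀ x ∈ Icc a b, HasDerivAt (fun x => μ.real (Iio x)) (φ x) x) :
    μ (Ico a b) = ∫⁻ x in Ico a b, ENNReal.ofReal (φ x) := by
  have hint := intervalIntegrable_of_hasDerivAt_measureReal_Iio hab hφ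
  have hnonneg : 0 ≤ᵐ[volume.restrict (Ico a b)] φ :=
    ae_restrict_of_forall_mem measurableSet_Ico fun x hx =>
      (hφ x (Ico_subset_Icc_self hx)).nonneg_of_monotone monotone_measureReal_Iio
  have hftc : ∫ x in a..b, φ x = μ.real (Ico a b) := by
    rw [measureReal_Ico_eq_sub hab]
    exact intervalIntegral.integral_eq_sub_of_hasDerivAt (uIcc_of_le hab ▸ hφ) hint
  rw [← ofReal_integral_eq_lintegral_ofReal
      ((intervalIntegrable_iff_integrableOn_Ico_of_le hab).1 hint) hnonneg,
    integral_Ico_eq_integral_Ioc, ← intervalIntegral.integral_of_le hab, hftc, ofReal_measureReal]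

lemma restrict_Ico_eq_withDensity_of_hasDerivAt [IsFiniteMeasure μ] {φ : ℝ → ℝ} {a b : ℝ}
    (hφ : ∀ x ∈ Icc a b, HasDerivAt (fun x => μ.real (Iio x)) (φ x) x) :
    μ.restrict (Ico a b) =
      (volume.restrict (Ico a b)).withDensity fun x => ENNReal.ofReal (φ x) := by
  refine Measure.ext_of_Ico _ _ fun s t _ => ?_
  rw [Measure.restrict_apply measurableSet_Ico, withDensity_apply _ measurableSet_Ico,
    Measure.restrict_restrict measurableSet_Ico, Ico_inter_Ico]
  rcases le_total (max s a) (min t b) with hle | hle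
  · exact measure_Ico_eq_setLIntegral_of_hasDerivAt hle fun x hx =>
      hφ x ⟨(le_max_right _ _).trans hx.1, hx.2.trans (min_le_right _ _)⟩
  · simp [Ico_eq_empty_of_le hle]

lemma setIntegral_Ico_eq_intervalIntegral_mul_of_hasDerivAt [IsFiniteMeasure μ] {φ : ℝ → ℝ}
    {a b : ℝ} (hab : a ≤ b)
    (hφ : ∀ x ∈ Icc a b, HasDerivAt (fun x => μ.real (Iio x)) (φ x) x) (f : ℝ → ℝ) :
    ∫ x in Ico a b, f x ∂μ = ∫ x in a..b, f x * φ x := by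
  have hint : IntegrableOn φ (Ico a b) :=
    (intervalIntegrable_iff_integrableOn_Ico_of_le hab).1
      (intervalIntegrable_of_hasDerivAt_measureReal_Iio hab hφ)
  rw [restrict_Ico_eq_withDensity_of_hasDerivAt hφ,
    integral_withDensity_eq_integral_toReal_smul₀ hint.aemeasurable.ennreal_ofReal (by simp),
    intervalIntegral.integral_of_le hab, ← integral_Ico_eq_integral_Ioc]
  refine setIntegral_congr_fun measurableSet_Ico fun x hx => ?_
  have hnonneg : 0 ≤ φ x :=
    (hφ x (Ico_subset_Icc_self hx)).nonneg_of_monotone monotone_measureReal_Iio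
  simp only [smul_eq_mul, ENNReal.toReal_ofReal hnonneg, mul_comm]

end RealMeasure

section ProductMeasure

variable {X Y : Type*} [MeasurableSpace X] [MeasurableSpace Y]

lemma measureReal_prod_eq_integral_left {μ : Measure X} {ν : Measure Y} [SFinite μ]
    [IsFiniteMeasure ν] {E : Set (X × Y)} (hE : MeasurableSet E) :
    (μ.prod ν).real E = ∫ x, ν.real (Prod.mk x ⁻¹' E) ∂μ := by
  rw [measureReal_def, Measure.prod_apply hE]
  exact (integral_toReal (measurable_measure_prodMk_left hE).aemeasurable
    (ae_of_all _ fun _ => measure_lt_top _ _)).symm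

lemma measureReal_prod_eq_integral_right {μ : Measure X} {ν : Measure Y} [IsFiniteMeasure μ]
    [SFinite ν] {E : Set (X × Y)} (hE : MeasurableSet E) :
    (μ.prod ν).real E = ∫ y, μ.real ((fun x => (x, y)) ⁻¹' E) ∂ν := by
  rw [measureReal_def, Measure.prod_apply_symm hE]
  exact (integral_toReal (measurable_measure_prodMk_right hE).aemeasurable
    (ae_of_all _ fun _ => measure_lt_top _ _)).symm

lemma measureReal_prod_setOf_mem_and_le {μ : Measure ℝ} {ν : Measure Y} [IsFiniteMeasure μ]
    [SFinite ν] {S : Set Y} (hS : MeasurableSet S) {f : Y → ℝ} (hf : Measurable f) :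
    (μ.prod ν).real {p | p.2 ∈ S ∧ f p.2 ≤ p.1} = ∫ y in S, μ.real (Ici (f y)) ∂ν := by
  have hE : MeasurableSet {p : ℝ × Y | p.2 ∈ S ∧ f p.2 ≤ p.1} :=
    (measurable_snd hS).inter (measurableSet_le (hf.comp measurable_snd) measurable_fst)
  rw [measureReal_prod_eq_integral_right hE, ← integral_indicator hS]
  congr with y
  by_cases hy : y ∈ S
  · simp [hy, Ici_def]
  · simp [hy]

lemma setIntegral_Ico_measureReal_Ici_max {μ ν : Measure ℝ} [IsFiniteMeasure μ]
    [IsFiniteMeasure ν] {f : ℝ → ℝ} (hf : Measurable f) {a L b : ℝ} (haL : a ≤ L) (hLb : L ≤ b)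
    (hf_le : ∀ y ∈ Ico a L, f y ≤ b) (hf_ge : ∀ y ∈ Ico L b, b ≤ f y) :
    ∫ y in Ico a b, μ.real (Ici (max b (f y))) ∂ν =
      ∫ y in Ico L b, μ.real (Ici (f y)) ∂ν + μ.real (Ici b) * ν.real (Ico a L) := by
  have hanti : Antitone fun x => μ.real (Ici x) :=
    fun _ _ hxy => measureReal_mono (Ici_subset_Ici.2 hxy)
  have hint : Integrable (fun y => μ.real (Ici (max b (f y)))) ν :=
    .of_bound (hanti.measurable.comp (measurable_const.max hf)).aestronglyMeasurable (μ.real univ)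
      (ae_of_all _ fun _ => by
        simpa only [norm_of_nonneg measureReal_nonneg] using measureReal_mono (subset_univ _))
  have hlow : ∫ y in Ico a L, μ.real (Ici (max b (f y))) ∂ν =
      μ.real (Ici b) * ν.real (Ico a L) := by
    rw [setIntegral_congr_fun (g := fun _ => μ.real (Ici b)) measurableSet_Ico fun y hy => by
      simp only [max_eq_left (hf_le y hy)], setIntegral_const, smul_eq_mul, mul_comm]
  have hhigh : ∫ y in Ico L b, μ.real (Ici (max b (f y))) ∂ν =
      ∫ y in Ico L b, μ.real (Ici (f y)) ∂ν :=
    setIntegral_congr_fun measurableSet_Ico fun y hy => by simp only [max_eq_right (hf_ge y hy)]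
  rw [← Ico_union_Ico_eq_Ico haL hLb, setIntegral_union Ico_disjoint_Ico_same measurableSet_Ico
    hint.integrableOn hint.integrableOn, hlow, hhigh, add_comm]

end ProductMeasure

section SuccessEvent

/-- The event that received powers `p = (X₁, X₂)` fall into the high and the low group of the
threshold `β` and that successive interference cancellation decodes both nodes. -/
def successEvent (PT Noise γ ξ₁ ξ₂ β : ℝ) : Set (ℝ × ℝ) :=
  {p | β ≤ p.1 ∧ p.2 < β ∧ γ * (PT * ξ₂ * p.2 + Noise) ≤ PT * ξ₁ * p.1 ∧
    γ * Noise ≤ PT * ξ₂ * p.2}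

noncomputable instance decidableMemSuccessEvent (PT Noise γ ξ₁ ξ₂ β : ℝ) :
    DecidablePred (· ∈ successEvent PT Noise γ ξ₁ ξ₂ β) :=
  fun _ => inferInstanceAs (Decidable (_ ∧ _ ∧ _ ∧ _))

lemma measurableSet_successEvent (PT Noise γ ξ₁ ξ₂ β : ℝ) :
    MeasurableSet (successEvent PT Noise γ ξ₁ ξ₂ β) := by
  unfold successEvent
  measurability

variable {PT Noise γ ξ₁ ξ₂ β : ℝ}

lemma snr_ge_iff (hPT : 0 < PT) (hξ₂ : 0 < ξ₂) (y : ℝ) :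
    γ * Noise ≤ PT * ξ₂ * y ↔ Noise * γ / (PT * ξ₂) ≤ y := by
  rw [div_le_iff₀ (by positivity), mul_comm γ, mul_comm y]

lemma sinr_ge_iff (hPT : 0 < PT) (hξ₁ : 0 < ξ₁) (x y : ℝ) :
    γ * (PT * ξ₂ * y + Noise) ≤ PT * ξ₁ * x ↔
      γ * (ξ₂ / ξ₁) * y + Noise * γ / (PT * ξ₁) ≤ x := by
  have hthreshold : γ * (ξ₂ / ξ₁) * y + Noise * γ / (PT * ξ₁) =
      γ * (PT * ξ₂ * y + Noise) / (PT * ξ₁) := by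
    field_simp
  rw [hthreshold, div_le_iff₀ (by positivity), mul_comm x]

lemma le_sinr_threshold_iff (hPT : 0 < PT) (hγ : 0 < γ) (hξ₁ : 0 < ξ₁) (hξ₂ : 0 < ξ₂) (y : ℝ) :
    β ≤ γ * (ξ₂ / ξ₁) * y + Noise * γ / (PT * ξ₁) ↔
      β / (γ * (ξ₂ / ξ₁)) - Noise / (PT * ξ₂) ≤ y := by
  have hnoise : Noise / (PT * ξ₂) = Noise * γ / (PT * ξ₁) / (γ * (ξ₂ / ξ₁)) := by field_simp
  rw [hnoise, ← sub_div, div_le_iff₀ (by positivity), sub_le_iff_le_add, mul_comm y]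

lemma successEvent_eq_setOf_mem_Ico_and_max_le (hPT : 0 < PT) (hξ₁ : 0 < ξ₁) (hξ₂ : 0 < ξ₂) :
    successEvent PT Noise γ ξ₁ ξ₂ β =
      {p | p.2 ∈ Ico (Noise * γ / (PT * ξ₂)) β ∧
        max β (γ * (ξ₂ / ξ₁) * p.2 + Noise * γ / (PT * ξ₁)) ≤ p.1} := by
  ext p
  simp only [successEvent, mem_ofPred_eq, snr_ge_iff hPT hξ₂, sinr_ge_iff hPT hξ₁, mem_Ico,
    max_le_iff]
  tauto

theorem measureReal_prod_successEvent {μ ν : Measure ℝ} [IsProbabilityMeasure μ]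
    [IsFiniteMeasure ν] (hPT : 0 < PT) (hγ : 0 < γ) (hξ₁ : 0 < ξ₁) (hξ₂ : 0 < ξ₂)
    (hβ : Noise * γ / (PT * ξ₂) ≤ β) {L : ℝ}
    (hL : L = min β (max (Noise * γ / (PT * ξ₂))
      (β / (γ * (ξ₂ / ξ₁)) - Noise / (PT * ξ₂))))
    {φ : ℝ → ℝ} (hφ : ∀ x ∈ Icc L β, HasDerivAt (fun x => ν.real (Iio x)) (φ x) x) :
    (μ.prod ν).real (successEvent PT Noise γ ξ₁ ξ₂ β) =
      (∫ x in L..β, (1 - μ.real (Iio (γ * (ξ₂ / ξ₁) * x + Noise * γ / (PT * ξ₁)))) * φ x) +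
        (1 - μ.real (Iio β)) * (ν.real (Iio L) - ν.real (Iio (Noise * γ / (PT * ξ₂)))) := by
  have hthreshold (y : ℝ) := le_sinr_threshold_iff (β := β) (Noise := Noise) hPT hγ hξ₁ hξ₂ y
  have hsnr_le : Noise * γ / (PT * ξ₂) ≤ L := hL ▸ le_min hβ (le_max_left _ _)
  have hLβ : L ≤ β := hL ▸ min_le_left _ _
  have hbelow : ∀ y ∈ Ico (Noise * γ / (PT * ξ₂)) L,
      γ * (ξ₂ / ξ₁) * y + Noise * γ / (PT * ξ₁) ≤ β := by
    intro y hy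
    refine (lt_of_not_ge fun hge => ?_).le
    have := (hthreshold y).1 hge
    grind
  have habove : ∀ y ∈ Ico L β, β ≤ γ * (ξ₂ / ξ₁) * y + Noise * γ / (PT * ξ₁) :=
    fun y hy => (hthreshold y).2 (by grind)
  rw [successEvent_eq_setOf_mem_Ico_and_max_le hPT hξ₁ hξ₂,
    measureReal_prod_setOf_mem_and_le measurableSet_Ico
      (f := fun y => max β (γ * (ξ₂ / ξ₁) * y + Noise * γ / (PT * ξ₁))) (by fun_prop),
    setIntegral_Ico_measureReal_Ici_max (by fun_prop) hsnr_le hLβ hbelow habove,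
    measureReal_Ico_eq_sub hsnr_le]
  simp only [measureReal_Ici_eq_one_sub]
  rw [setIntegral_Ico_eq_intervalIntegral_mul_of_hasDerivAt hLβ hφ]

end SuccessEvent

section ReceivedPower

/-- The normalized received power `g² r^{-2α}` of a node at distance `r` with fading gain `g`. -/
noncomputable def receivedPower (α g r : ℝ) : ℝ := g ^ 2 * r ^ (-(2 * α))

/-- The density of the fading gain `g` on `(0, ∞)`: the Gamma density with shape and rate `m`.
It agrees with `gammaPDFReal m m` there, but is not cut off on the negative half-line. -/
noncomputable def gainDensity (m g : ℝ) : ℝ := m ^ m * g ^ (m - 1) * exp (-m * g) / Gamma m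

/-- The density on `(R₁, R]` of the distance to the centre of a uniform point of the annulus with
radii `R₁` and `R`, not cut off outside this interval. -/
noncomputable def radiusDensity (R₁ R r : ℝ) : ℝ := 2 * r / (R ^ 2 - R₁ ^ 2)

/-- The law of the distance of a uniform point of the annulus with radii `R₁` and `R`. -/
noncomputable def radiusMeasure (R₁ R : ℝ) : Measure ℝ :=
  (volume.restrict (Ioc R₁ R)).withDensity fun r => ENNReal.ofReal (radiusDensity R₁ R r)

/-- The law of the received power of a node whose fading gain and distance are independent. -/
noncomputable def receivedPowerMeasure (m α R₁ R : ℝ) : Measure ℝ :=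
  ((gammaMeasure m m).prod (radiusMeasure R₁ R)).map fun p => receivedPower α p.1 p.2

lemma measurable_receivedPower (α : ℝ) : Measurable fun p : ℝ × ℝ => receivedPower α p.1 p.2 := by
  unfold receivedPower
  fun_prop

lemma continuous_radiusDensity (R₁ R : ℝ) : Continuous (radiusDensity R₁ R) := by
  unfold radiusDensity
  fun_prop

variable {m α R₁ R : ℝ}

lemma gammaPDFReal_self_eq_gainDensity {g : ℝ} (hg : 0 ≤ g) :
    gammaPDFReal m m g = gainDensity m g := by
  rw [gammaPDFReal, if_pos hg, gainDensity, neg_mul]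
  ring

lemma integral_gammaMeasure_self (hm : 0 < m) (f : ℝ → ℝ) :
    ∫ g, f g ∂(gammaMeasure m m) = ∫ g in Ioi 0, gainDensity m g * f g := by
  have hpdf : ∫ g, f g ∂(gammaMeasure m m) = ∫ g, gammaPDFReal m m g * f g := by
    rw [gammaMeasure, integral_withDensity_eq_integral_toReal_smul
      (f := gammaPDF m m) (measurable_gammaPDFReal m m).ennreal_ofReal (by simp [gammaPDF])]
    simp only [gammaPDF, ENNReal.toReal_ofReal (gammaPDFReal_nonneg hm hm _), smul_eq_mul]
  have hsupport : ∀ g ∉ Ici (0 : ℝ), gammaPDFReal m m g * f g = 0 := fun g hg => by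
    rw [gammaPDFReal, if_neg (notMem_Ici.1 hg).not_ge, zero_mul]
  rw [hpdf, ← setIntegral_eq_integral_of_forall_compl_eq_zero hsupport,
    integral_Ici_eq_integral_Ioi]
  exact setIntegral_congr_fun measurableSet_Ioi fun g (hg : 0 < g) => by
    simp only [gammaPDFReal_self_eq_gainDensity hg.le]

lemma radiusDensity_nonneg (hR₁ : 0 ≤ R₁) (hR : R₁ < R) {r : ℝ} (hr : r ∈ Ioc R₁ R) :
    0 ≤ radiusDensity R₁ R r := by
  have hr₀ : 0 ≤ r := hR₁.trans hr.1.le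
  have harea : 0 ≤ R ^ 2 - R₁ ^ 2 := by nlinarith
  unfold radiusDensity
  positivity

lemma integral_radiusDensity (hR₁ : 0 ≤ R₁) (hR : R₁ < R) :
    ∫ r in R₁..R, radiusDensity R₁ R r = 1 := by
  have harea : R ^ 2 - R₁ ^ 2 ≠ 0 := by nlinarith
  simp only [radiusDensity]
  rw [intervalIntegral.integral_div, intervalIntegral.integral_const_mul, integral_id]
  field_simp

lemma isProbabilityMeasure_radiusMeasure (hR₁ : 0 ≤ R₁) (hR : R₁ < R) :
    IsProbabilityMeasure (radiusMeasure R₁ R) where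
  measure_univ := by
    rw [radiusMeasure, withDensity_apply _ MeasurableSet.univ, Measure.restrict_univ,
      ← ofReal_integral_eq_lintegral_ofReal (continuous_radiusDensity R₁ R).integrableOn_Ioc
        (ae_restrict_of_forall_mem measurableSet_Ioc fun _ => radiusDensity_nonneg hR₁ hR),
      ← intervalIntegral.integral_of_le hR.le, integral_radiusDensity hR₁ hR, ENNReal.ofReal_one]

lemma integral_radiusMeasure (hR₁ : 0 ≤ R₁) (hR : R₁ < R) (f : ℝ → ℝ) :
    ∫ r, f r ∂(radiusMeasure R₁ R) = ∫ r in R₁..R, radiusDensity R₁ R r * f r := by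
  rw [radiusMeasure, integral_withDensity_eq_integral_toReal_smul
    (continuous_radiusDensity R₁ R).measurable.ennreal_ofReal (by simp),
    intervalIntegral.integral_of_le hR.le]
  exact setIntegral_congr_fun measurableSet_Ioc fun r hr => by
    simp only [ENNReal.toReal_ofReal (radiusDensity_nonneg hR₁ hR hr), smul_eq_mul]

lemma isProbabilityMeasure_receivedPowerMeasure (hm : 0 < m) (hR₁ : 0 ≤ R₁) (hR : R₁ < R) :
    IsProbabilityMeasure (receivedPowerMeasure m α R₁ R) := by
  have := isProbabilityMeasure_gammaMeasure hm hm
  have := isProbabilityMeasure_radiusMeasure hR₁ hR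
  exact Measure.isProbabilityMeasure_map (measurable_receivedPower α).aemeasurable

lemma integral_receivedPowerMeasure (hm : 0 < m) (hR₁ : 0 ≤ R₁) (hR : R₁ < R) {f : ℝ → ℝ}
    (hf : Integrable f (receivedPowerMeasure m α R₁ R)) :
    ∫ x, f x ∂(receivedPowerMeasure m α R₁ R) =
      ∫ g in Ioi 0, ∫ r in R₁..R,
        gainDensity m g * radiusDensity R₁ R r * f (receivedPower α g r) := by
  have := isProbabilityMeasure_gammaMeasure hm hm
  have := isProbabilityMeasure_radiusMeasure hR₁ hR
  have hX := (measurable_receivedPower α).aemeasurable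
    (μ := (gammaMeasure m m).prod (radiusMeasure R₁ R))
  rw [receivedPowerMeasure, integral_map hX hf.aestronglyMeasurable,
    integral_prod (fun p => f (receivedPower α p.1 p.2)) (hf.comp_aemeasurable hX),
    integral_gammaMeasure_self hm]
  simp only [integral_radiusMeasure hR₁ hR, mul_assoc, intervalIntegral.integral_const_mul]

lemma measureReal_receivedPowerMeasure (hm : 0 < m) (hR₁ : 0 ≤ R₁) (hR : R₁ < R) {S : Set ℝ}
    [DecidablePred (· ∈ S)] (hS : MeasurableSet S) :
    (receivedPowerMeasure m α R₁ R).real S =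
      ∫ g in Ioi 0, ∫ r in R₁..R,
        if receivedPower α g r ∈ S then gainDensity m g * radiusDensity R₁ R r else 0 := by
  have := isProbabilityMeasure_receivedPowerMeasure (α := α) hm hR₁ hR
  rw [← integral_indicator_one hS, integral_receivedPowerMeasure hm hR₁ hR (f := S.indicator 1)
    ((integrable_const 1).indicator hS)]
  simp only [indicator_apply, Pi.one_apply, mul_ite, mul_one, mul_zero]

lemma measureReal_Iio_receivedPowerMeasure (hm : 0 < m) (hR₁ : 0 ≤ R₁) (hR : R₁ < R) (x : ℝ) :
    (receivedPowerMeasure m α R₁ R).real (Iio x) = compositeCDF m α R₁ R x :=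
  measureReal_receivedPowerMeasure hm hR₁ hR measurableSet_Iio

lemma measureReal_prod_receivedPowerMeasure (hm : 0 < m) (hR₁ : 0 ≤ R₁) (hR : R₁ < R)
    {E : Set (ℝ × ℝ)} [DecidablePred (· ∈ E)] (hE : MeasurableSet E) :
    ((receivedPowerMeasure m α R₁ R).prod (receivedPowerMeasure m α R₁ R)).real E =
      ∫ g₁ in Ioi 0, ∫ r₁ in R₁..R, ∫ g₂ in Ioi 0, ∫ r₂ in R₁..R,
        if (receivedPower α g₁ r₁, receivedPower α g₂ r₂) ∈ E
        then gainDensity m g₁ * radiusDensity R₁ R r₁ * (gainDensity m g₂ * radiusDensity R₁ R r₂)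
        else 0 := by
  have := isProbabilityMeasure_receivedPowerMeasure (α := α) hm hR₁ hR
  let _ (x : ℝ) : DecidablePred (· ∈ Prod.mk x ⁻¹' E) :=
    fun y => inferInstanceAs (Decidable ((x, y) ∈ E))
  have hsection (x : ℝ) := measureReal_receivedPowerMeasure (α := α) hm hR₁ hR
    (measurable_prodMk_left (x := x) hE)
  rw [measureReal_prod_eq_integral_left hE, integral_receivedPowerMeasure hm hR₁ hR
    (Measure.integrable_measure_prodMk_left hE (measure_ne_top _ _))]
  simp only [hsection, ← integral_const_mul, ← intervalIntegral.integral_const_mul, mul_ite,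
    mul_zero, mem_preimage]

end ReceivedPower

theorem backcom_power_division_p2_general
    (m α R₁ R PT Noise γ ξ₁ ξ₂ κ βt : ℝ)
    (hm : 0 < m) (h0 : 0 ≤ R₁) (h1R : R₁ < R)
    (hPT : 0 < PT) (hNoise : 0 < Noise) (hγ : 0 < γ)
    (hξ1 : 0 < ξ₁) (hξ2 : 0 < ξ₂) (hκ : κ = ξ₂ / ξ₁)
    (hβ : Noise * γ / (PT * ξ₂) ≤ βt)
    (hΦpos : 0 < compositeCDF m α R₁ R βt) (hΦlt : compositeCDF m α R₁ R βt < 1)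
    (φ : ℝ → ℝ)
    (hφ : ∀ x : ℝ, 0 < x → HasDerivAt (compositeCDF m α R₁ R) (φ x) x)
    (L : ℝ)
    (hL : L = min βt (max (Noise * γ / (PT * ξ₂)) (βt / (γ * κ) - Noise / (PT * ξ₂)))) :
    (∫ g₁ in Set.Ioi (0 : ℝ), ∫ r₁ in R₁..R, ∫ g₂ in Set.Ioi (0 : ℝ), ∫ r₂ in R₁..R,
        if βt ≤ g₁ ^ 2 * r₁ ^ (-(2 * α)) ∧ g₂ ^ 2 * r₂ ^ (-(2 * α)) < βt ∧
            γ * (PT * ξ₂ * (g₂ ^ 2 * r₂ ^ (-(2 * α))) + Noise) ≤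
              PT * ξ₁ * (g₁ ^ 2 * r₁ ^ (-(2 * α))) ∧
            γ * Noise ≤ PT * ξ₂ * (g₂ ^ 2 * r₂ ^ (-(2 * α)))
        then m ^ m * g₁ ^ (m - 1) * Real.exp (-m * g₁) / Real.Gamma m *
            (2 * r₁ / (R ^ 2 - R₁ ^ 2)) *
            (m ^ m * g₂ ^ (m - 1) * Real.exp (-m * g₂) / Real.Gamma m *
              (2 * r₂ / (R ^ 2 - R₁ ^ 2)))
        else 0) /
      ((1 - compositeCDF m α R₁ R βt) * compositeCDF m α R₁ R βt) =
      (∫ x in L..βt,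
          (1 - (compositeCDF m α R₁ R (γ * κ * x + Noise * γ / (PT * ξ₁)) -
              compositeCDF m α R₁ R βt) / (1 - compositeCDF m α R₁ R βt)) *
            (φ x / compositeCDF m α R₁ R βt)) +
        (compositeCDF m α R₁ R L - compositeCDF m α R₁ R (Noise * γ / (PT * ξ₂))) /
          compositeCDF m α R₁ R βt := by
  have := isProbabilityMeasure_receivedPowerMeasure (α := α) hm h0 h1R
  subst hκ
  set Φ := compositeCDF m α R₁ R
  have hcdf (x : ℝ) : (receivedPowerMeasure m α R₁ R).real (Iio x) = Φ x :=
    measureReal_Iio_receivedPowerMeasure hm h0 h1R x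
  have hsnr_pos : 0 < Noise * γ / (PT * ξ₂) := by positivity
  have hL_pos : 0 < L := hL ▸ lt_min (hsnr_pos.trans_le hβ) (lt_max_of_lt_left hsnr_pos)
  have hjoint := (measureReal_prod_receivedPowerMeasure (α := α) hm h0 h1R
      (measurableSet_successEvent PT Noise γ ξ₁ ξ₂ βt)).symm.trans
    (measureReal_prod_successEvent hPT hγ hξ1 hξ2 hβ hL fun x hx => by
      simpa only [hcdf] using hφ x (hL_pos.trans_le hx.1))
  simp only [hcdf] at hjoint
  have hhigh : 1 - Φ βt ≠ 0 := sub_ne_zero.2 hΦlt.ne'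
  have hintegrand (x : ℝ) :
      (1 - (Φ (γ * (ξ₂ / ξ₁) * x + Noise * γ / (PT * ξ₁)) - Φ βt) / (1 - Φ βt)) * (φ x / Φ βt) =
        (1 - Φ (γ * (ξ₂ / ξ₁) * x + Noise * γ / (PT * ξ₁))) * φ x / ((1 - Φ βt) * Φ βt) := by
    rw [one_sub_div hhigh, sub_sub_sub_cancel_right, div_mul_div_comm]
  simp only [hintegrand, intervalIntegral.integral_div]
  rw [← mul_div_mul_left (Φ L - Φ _) (Φ βt) hhigh, ← add_div]
  exact congrArg (· / _) hjoint

/-- Power division approach under Nakagami-m fading. `X₁ = g₁²·r₁^{−2α}`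
and `X₂ = g₂²·r₂^{−2α}` are i.i.d. composite variables on the annulus `[R₁, R]` with
common CDF `Φ = compositeCDF m α R₁ R` and density `φ`. The conditional probability
`p₂` that, given the grouping `X₁ ≥ β̃` and `X₂ < β̃`, the high-group node's SINR and
the low-group node's SNR both meet `γ` — expressed as the quadruple integral of the
joint density over the event (grouping and success), divided by the probability
`(1 − Φ(β̃))·Φ(β̃)` of the grouping — equals the stated expression with
`L = min{β̃, max{𝒩γ/(P_Tξ₂), β̃/(γκ) − 𝒩/(P_Tξ₂)}}`. -/
theorem backcom_power_division_p2
    (m α R₁ R PT Noise γ ξ₁ ξ₂ κ βt : ℝ)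
    (hm : 0 < m) (hα : 0 < α) (h0 : 0 < R₁) (h1R : R₁ < R)
    (hPT : 0 < PT) (hNoise : 0 < Noise) (hγ : 0 < γ)
    (hξ2 : 0 < ξ₂) (hξ21 : ξ₂ ≤ ξ₁) (hκ : κ = ξ₂ / ξ₁)
    (hβ : Noise * γ / (PT * ξ₂) < βt)
    (hΦpos : 0 < compositeCDF m α R₁ R βt) (hΦlt : compositeCDF m α R₁ R βt < 1)
    (φ : ℝ → ℝ)
    (hφ : ∀ x : ℝ, 0 < x → HasDerivAt (compositeCDF m α R₁ R) (φ x) x)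
    (L : ℝ)
    (hL : L = min βt (max (Noise * γ / (PT * ξ₂)) (βt / (γ * κ) - Noise / (PT * ξ₂)))) :
    (∫ g₁ in Set.Ioi (0 : ℝ), ∫ r₁ in R₁..R, ∫ g₂ in Set.Ioi (0 : ℝ), ∫ r₂ in R₁..R,
        if βt ≤ g₁ ^ 2 * r₁ ^ (-(2 * α)) ∧ g₂ ^ 2 * r₂ ^ (-(2 * α)) < βt ∧
            γ * (PT * ξ₂ * (g₂ ^ 2 * r₂ ^ (-(2 * α))) + Noise) ≤
              PT * ξ₁ * (g₁ ^ 2 * r₁ ^ (-(2 * α))) ∧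
            γ * Noise ≤ PT * ξ₂ * (g₂ ^ 2 * r₂ ^ (-(2 * α)))
        then m ^ m * g₁ ^ (m - 1) * Real.exp (-m * g₁) / Real.Gamma m *
            (2 * r₁ / (R ^ 2 - R₁ ^ 2)) *
            (m ^ m * g₂ ^ (m - 1) * Real.exp (-m * g₂) / Real.Gamma m *
              (2 * r₂ / (R ^ 2 - R₁ ^ 2)))
        else 0) /
      ((1 - compositeCDF m α R₁ R βt) * compositeCDF m α R₁ R βt) =
      (∫ x in L..βt,
          (1 - (compositeCDF m α R₁ R (γ * κ * x + Noise * γ / (PT * ξ₁)) -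
              compositeCDF m α R₁ R βt) / (1 - compositeCDF m α R₁ R βt)) *
            (φ x / compositeCDF m α R₁ R βt)) +
        (compositeCDF m α R₁ R L - compositeCDF m α R₁ R (Noise * γ / (PT * ξ₂))) /
          compositeCDF m α R₁ R βt :=
  backcom_power_division_p2_general m α R₁ R PT Noise γ ξ₁ ξ₂ κ βt hm h0.le h1R hPT hNoise hγ
    (hξ2.trans_le hξ21) hξ2 hκ hβ.le hΦpos hΦlt φ hφ L hL
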